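/- Let D ⊆ ℝ², let P₀ = (x₀, y₀) be an accumulation point of D, let f : ℝ² → ℝ and L ∈ ℝ. Assume there exists r > 0 such that the set ((B(P₀, r) \ {P₀}) ∩ D) ∪ {P₀} is convex, where B(P₀, r) is the open ball of radius r around P₀. Then f(P) → L as P → P₀ within D if and only if: for every constant φ₀ ∈ [0, 2π] and every function φ : (0, ∞) → ℝ satisfying φ(r) → φ₀ as r → 0⁺, such that the path P(r) = (x₀ + r·cos φ(r), y₀ + r·sin φ(r)) takes values in D for all sufficiently small r > 0, one has f(P(r)) → L as r → 0⁺. -/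

import Mathlib

/-!
The forward direction holds because the path stays in `D`, lies at distance exactly `r > 0` from
`P₀`, and hence tends to `P₀` within `D \ {P₀}`.

For the converse, suppose `f` does not tend to `L`. Then some neighbourhood of `L` is missed by
`f` along a sequence of points `Pₙ ∈ D \ {P₀}` tending to `P₀`. Write `Pₙ` in polar coordinates
`(ρₙ, θₙ)` around `P₀` with `θₙ ∈ [0, 2π]`; after passing to a subsequence, `θₙ → φ₀` and `ρₙ` is
strictly decreasing. The step function `φ = θₙ` on `(ρₙ₊₁, ρₙ]` tends to `φ₀`, and convexity puts
the segment from `P₀` to `Pₙ` inside `D ∪ {P₀}`, so the path of `φ` lies in `D` near `0`. Since the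
path passes through every `Pₙ`, the values of `f` along it do not tend to `L`.
-/

open Filter Topology Real

/-- A point of the Euclidean plane given by its two coordinates. -/
noncomputable def pt (x y : ℝ) : EuclideanSpace ℝ (Fin 2) :=
  (EuclideanSpace.equiv (Fin 2) ℝ).symm ![x, y]

lemma dist_polar (x₀ y₀ r θ : ℝ) (hr : 0 ≤ r) :
    dist (pt (x₀ + r * Real.cos θ) (y₀ + r * Real.sin θ)) (pt x₀ y₀) = r := by
  rw [EuclideanSpace.dist_eq]
  simp only [pt, Fin.sum_univ_two, Real.dist_eq, sq_abs]
  simp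
  rw [← Real.sqrt_sq hr]
  congr 1
  rw [Real.sqrt_sq hr]
  linear_combination r ^ 2 * Real.sin_sq_add_cos_sq θ

lemma exists_polar (x₀ y₀ : ℝ) (P : EuclideanSpace ℝ (Fin 2)) :
    ∃ θ ∈ Set.Icc (0 : ℝ) (2 * π),
      P = pt (x₀ + dist P (pt x₀ y₀) * Real.cos θ) (y₀ + dist P (pt x₀ y₀) * Real.sin θ) := by
  obtain ⟨r, θ, hr, hθ, hP⟩ : ∃ r θ : ℝ, 0 ≤ r ∧ θ ∈ Set.Icc (0 : ℝ) (2 * π) ∧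
      P = pt (x₀ + r * Real.cos θ) (y₀ + r * Real.sin θ) := by
    let z : ℂ := ⟨P 0 - x₀, P 1 - y₀⟩
    have hre : ‖z‖ * Real.cos z.arg = P 0 - x₀ := Complex.norm_mul_cos_arg z
    have him : ‖z‖ * Real.sin z.arg = P 1 - y₀ := Complex.norm_mul_sin_arg z
    have key : ∀ θ, Real.cos θ = Real.cos z.arg → Real.sin θ = Real.sin z.arg →
        P = pt (x₀ + ‖z‖ * Real.cos θ) (y₀ + ‖z‖ * Real.sin θ) := by
      intro θ hc hs
      rw [hc, hs, hre, him]
      ext i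
      fin_cases i <;> simp [pt]
    have h1 := Complex.neg_pi_lt_arg z
    have h2 := Complex.arg_le_pi z
    -- `Complex.arg` takes values in `(-π, π]`, so negative arguments are shifted by `2π`.
    rcases le_or_gt 0 z.arg with h | h
    · exact ⟨‖z‖, z.arg, norm_nonneg _, ⟨h, by linarith⟩, key _ rfl rfl⟩
    · exact ⟨‖z‖, z.arg + 2 * π, norm_nonneg _, ⟨by linarith, by linarith⟩,
        key _ (Real.cos_add_two_pi _) (Real.sin_add_two_pi _)⟩
  refine ⟨θ, hθ, ?_⟩
  have hd : dist P (pt x₀ y₀) = r := by rw [hP]; exact dist_polar x₀ y₀ r θ hr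
  rw [hd]
  exact hP

/-- Under the convexity hypothesis, a point of `D` near `P₀` brings with it the whole half-open
segment that joins it to `P₀`. -/
lemma polar_mem_of_le {D : Set (EuclideanSpace ℝ (Fin 2))} {x₀ y₀ R : ℝ}
    (hconv : Convex ℝ (((Metric.ball (pt x₀ y₀) R \ {pt x₀ y₀}) ∩ D) ∪ {pt x₀ y₀}))
    {r s θ : ℝ} (hr : 0 < r) (hrs : r ≤ s) (hsR : s < R)
    (hs : pt (x₀ + s * Real.cos θ) (y₀ + s * Real.sin θ) ∈ D) :
    pt (x₀ + r * Real.cos θ) (y₀ + r * Real.sin θ) ∈ D := by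
  have hs0 : 0 < s := hr.trans_le hrs
  have hne : ∀ t : ℝ, 0 < t →
      pt (x₀ + t * Real.cos θ) (y₀ + t * Real.sin θ) ≠ pt x₀ y₀ := by
    intro t ht h
    have := dist_polar x₀ y₀ t θ ht.le
    rw [h, dist_self] at this
    exact ht.ne this
  have hmem : pt (x₀ + s * Real.cos θ) (y₀ + s * Real.sin θ) ∈
      ((Metric.ball (pt x₀ y₀) R \ {pt x₀ y₀}) ∩ D) ∪ {pt x₀ y₀} := by
    refine Or.inl ⟨⟨?_, hne s hs0⟩, hs⟩
    rw [Metric.mem_ball, dist_polar x₀ y₀ s θ hs0.le]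
    exact hsR
  have hcomb := hconv (Or.inr rfl : pt x₀ y₀ ∈ _) hmem
    (sub_nonneg.2 ((div_le_one hs0).2 hrs)) (div_nonneg hr.le hs0.le) (sub_add_cancel 1 (r / s))
  have heq : (1 - r / s) • pt x₀ y₀ + (r / s) • pt (x₀ + s * Real.cos θ) (y₀ + s * Real.sin θ)
      = pt (x₀ + r * Real.cos θ) (y₀ + r * Real.sin θ) := by
    ext i
    fin_cases i <;> simp [pt] <;> field_simp <;> ring
  rw [heq] at hcomb
  rcases hcomb with h | h
  · exact h.2
  · exact absurd h (hne r hr)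

/-- A real sequence decreasing strictly to `0` cuts `(0, ρ₀]` into the intervals `(ρₙ₊₁, ρₙ]`.
The witness `N` is the index of the interval containing its argument, and the lemma records the
properties of this index that the step function `φ` needs. -/
lemma exists_step_index {ρ : ℕ → ℝ} (hanti : StrictAnti ρ) (hpos : ∀ n, 0 < ρ n)
    (hlim : Tendsto ρ atTop (𝓝 0)) :
    ∃ N : ℝ → ℕ, Tendsto N (𝓝[>] 0) atTop ∧ (∀ n, N (ρ n) = n) ∧
      ∀ r, 0 < r → r ≤ ρ 0 → r ≤ ρ (N r) := by
  classical
  have hex : ∀ r : ℝ, 0 < r → ∃ n, ρ (n + 1) < r := fun r hr =>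
    (((tendsto_add_atTop_iff_nat 1).2 hlim).eventually (gt_mem_nhds hr)).exists
  let N : ℝ → ℕ := fun r => if h : 0 < r then Nat.find (hex r h) else 0
  have hN : ∀ r (h : 0 < r), N r = Nat.find (hex r h) := fun r h => dif_pos h
  refine ⟨N, ?_, ?_, ?_⟩
  · refine tendsto_atTop.2 fun M => ?_
    filter_upwards [Ioo_mem_nhdsGT (hpos M)] with r hr
    rw [hN r hr.1, Nat.le_find_iff]
    intro m hm
    exact not_lt.2 (hr.2.le.trans (hanti.antitone hm))
  · intro n
    rw [hN _ (hpos n), Nat.find_eq_iff]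
    exact ⟨hanti n.lt_succ_self, fun m hm => not_lt.2 (hanti.antitone hm)⟩
  · intro r hr hr0
    rcases h : N r with _ | k
    · exact hr0
    · rw [hN r hr] at h
      exact not_lt.1 (Nat.find_min (hex r hr) (m := k) (by omega))

/-- **Theorem 2.** Let `D ⊆ ℝ²`, let `P₀ = (x₀, y₀)` be an accumulation point of `D`,
and assume there is `r > 0` such that `((B(P₀, r) \ {P₀}) ∩ D) ∪ {P₀}` is convex.
Then `f(P) → L` as `P → P₀` within `D` iff for every `φ₀ ∈ [0, 2π]` and every function
`φ` with `φ(r) → φ₀` as `r → 0⁺` such that the path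
`P(r) = (x₀ + r cos φ(r), y₀ + r sin φ(r))` lies in `D` for all sufficiently small
`r > 0`, one has `f(P(r)) → L` as `r → 0⁺`. -/
theorem stmt_2 (D : Set (EuclideanSpace ℝ (Fin 2))) (x₀ y₀ : ℝ)
    (hacc : AccPt (pt x₀ y₀) (𝓟 D)) (f : EuclideanSpace ℝ (Fin 2) → ℝ) (L : ℝ)
    (hconv : ∃ r > (0 : ℝ),
      Convex ℝ (((Metric.ball (pt x₀ y₀) r \ {pt x₀ y₀}) ∩ D) ∪ {pt x₀ y₀})) :
    Tendsto f (𝓝[D \ {pt x₀ y₀}] (pt x₀ y₀)) (𝓝 L) ↔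
      ∀ φ₀ ∈ Set.Icc (0 : ℝ) (2 * π), ∀ φ : ℝ → ℝ,
        Tendsto φ (𝓝[>] 0) (𝓝 φ₀) →
        (∀ᶠ r in 𝓝[>] (0 : ℝ),
          pt (x₀ + r * Real.cos (φ r)) (y₀ + r * Real.sin (φ r)) ∈ D) →
        Tendsto (fun r => f (pt (x₀ + r * Real.cos (φ r)) (y₀ + r * Real.sin (φ r))))
          (𝓝[>] 0) (𝓝 L) := by
  constructor
  · intro hf φ₀ _ φ _ hD
    refine hf.comp (tendsto_nhdsWithin_iff.2 ⟨?_, ?_⟩)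
    · rw [tendsto_iff_dist_tendsto_zero]
      refine (tendsto_nhdsWithin_of_tendsto_nhds tendsto_id : Tendsto id (𝓝[>] (0 : ℝ)) _).congr' ?_
      filter_upwards [self_mem_nhdsWithin] with r hr
      exact (dist_polar x₀ y₀ r (φ r) (le_of_lt hr)).symm
    · filter_upwards [hD, self_mem_nhdsWithin] with r hrD hr
      refine ⟨hrD, fun h => ?_⟩
      have hd := dist_polar x₀ y₀ r (φ r) (le_of_lt hr)
      rw [Set.mem_singleton_iff.1 h, dist_self] at hd
      exact (ne_of_lt hr) hd
  · intro H
    obtain ⟨R, hR, hconv⟩ := hconv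
    by_contra hnot
    obtain ⟨U, hU, hfreq⟩ := not_tendsto_iff_exists_frequently_notMem.1 hnot
    obtain ⟨P, hP, hPU⟩ := exists_seq_forall_of_frequently hfreq
    obtain ⟨hP0, hPD⟩ := tendsto_nhdsWithin_iff.1 hP
    -- Discard finitely many terms so that every `P n` lies in `D \ {P₀}` and in the ball.
    obtain ⟨K, hK⟩ := eventually_atTop.1
      (hPD.and (hP0.eventually (Metric.ball_mem_nhds (pt x₀ y₀) hR)))
    choose θ hθ hPθ using fun n => exists_polar x₀ y₀ (P n)
    obtain ⟨φ₀, hφ₀, a, ha, hlim⟩ :=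
      (isCompact_Icc (a := (0 : ℝ)) (b := 2 * π)).tendsto_subseq (fun n => hθ (n + K))
    have haK : Tendsto (fun n => a n + K) atTop atTop :=
      (tendsto_add_atTop_nat K).comp ha.tendsto_atTop
    have hρpos : ∀ n, 0 < dist (P (a n + K)) (pt x₀ y₀) := fun n =>
      dist_pos.2 (hK _ (Nat.le_add_left K (a n))).1.2
    have hρlim : Tendsto (fun n => dist (P (a n + K)) (pt x₀ y₀)) atTop (𝓝 0) :=
      (tendsto_iff_dist_tendsto_zero.1 hP0).comp haK
    -- Strict decrease of the radii comes from strict growth of their inverses.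
    obtain ⟨b, hb, hbmono⟩ := strictMono_subseq_of_tendsto_atTop
      ((tendsto_nhdsWithin_iff.2
        ⟨hρlim, Eventually.of_forall hρpos⟩).inv_tendsto_nhdsGT_zero)
    let k : ℕ → ℕ := fun n => a (b n) + K
    let ρ : ℕ → ℝ := fun n => dist (P (k n)) (pt x₀ y₀)
    have hpos : ∀ n, 0 < ρ n := fun n => hρpos (b n)
    have hρ0 : Tendsto ρ atTop (𝓝 0) := hρlim.comp hb.tendsto_atTop
    have hanti : StrictAnti ρ := fun m n hmn =>
      (inv_lt_inv₀ (hpos m) (hpos n)).1 (hbmono hmn)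
    have hkK : ∀ n, K ≤ k n := fun n => Nat.le_add_left K _
    obtain ⟨N, hNtop, hNρ, hNle⟩ := exists_step_index hanti hpos hρ0
    have hpath := H φ₀ hφ₀ (fun r => θ (k (N r)))
      ((hlim.comp hb.tendsto_atTop).comp hNtop) (by
        filter_upwards [Ioo_mem_nhdsGT (hpos 0)] with r hr
        refine polar_mem_of_le hconv hr.1 (hNle r hr.1 hr.2.le) (hK _ (hkK (N r))).2 ?_
        have hmem := (hK _ (hkK (N r))).1.1
        rw [hPθ (k (N r))] at hmem
        exact hmem)
    have hseq := hpath.comp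
      (tendsto_nhdsWithin_iff.2 ⟨hρ0, Eventually.of_forall hpos⟩ : Tendsto ρ atTop (𝓝[>] 0))
    obtain ⟨n, hn⟩ := (hseq.eventually hU).exists
    apply hPU (k n)
    have hn' : f (pt (x₀ + ρ n * Real.cos (θ (k (N (ρ n)))))
      (y₀ + ρ n * Real.sin (θ (k (N (ρ n)))))) ∈ U := hn
    rw [hNρ n] at hn'
    rw [hPθ (k n)]
    exact hn'
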